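/- arXiv:math/0403094 — 3 statements merged into one kernel-verified Lean document; each statement's English description precedes it below -/
import Mathlib

section
/- Let λ, μ ∈ P_n be partitions of the number n. There exist set partitions σ, τ ∈ Π_n with shape sh(σ) = λ and sh(τ) = μ such that σ ∧ τ = 0̂ (the partition of [n] into singletons) if and only if the conjugate partition λ' dominates μ, i.e. μ ≤ λ' in the dominance order. -/
open Finset

/-- The partition lattice `Π_n`: set partitions of `{1,…,n}`, ordered by refinement. -/
abbrev SetPart (n : ℕ) := Finpartition (univ : Finset (Fin n))

/-- The shape of a set partition: the number partition formed by its block sizes. -/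
def shape {n : ℕ} (σ : SetPart n) : Nat.Partition n where
  parts := σ.parts.val.map Finset.card
  parts_pos := by
    intro i hi
    simp only [Multiset.mem_map, Finset.mem_val] at hi
    obtain ⟨p, hp, rfl⟩ := hi
    exact Finset.card_pos.mpr (σ.nonempty_of_mem_parts hp)
  parts_sum := by
    have h := σ.sum_card_parts
    rw [Finset.sum] at h
    rw [h, card_univ, Fintype.card_fin]

/-- The sum of the `k` largest parts of a number partition. -/
def topSum {n : ℕ} (μ : Nat.Partition n) (k : ℕ) : ℕ :=
  (((μ.parts.sort (· ≤ ·)).reverse).take k).sum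

/-- The `i+1`-st part of the conjugate (transpose) partition `λ'` of `λ`:
the number of parts of `λ` that are at least `i+1`. -/
def conjPart {n : ℕ} (lam : Nat.Partition n) (i : ℕ) : ℕ :=
  (lam.parts.filter (fun p => i + 1 ≤ p)).card

/-- `μ ≤ λ'` in the dominance order `Dom(n)`, where `λ'` is the conjugate of `λ`:
for every `k`, the sum of the `k` largest parts of `μ` is at most
`λ'_1 + ⋯ + λ'_k` (the parts of the conjugate being arranged decreasingly). -/
def DomLEConj {n : ℕ} (μ lam : Nat.Partition n) : Prop :=
  ∀ k, topSum μ k ≤ ∑ i ∈ Finset.range k, conjPart lam i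


theorem exists_top {ι : Type*} [DecidableEq ι] [Fintype ι] (r : ι → ℕ) (m : ℕ)
    (hm : m ≤ Fintype.card ι) :
    ∃ S : Finset ι, S.card = m ∧ ∀ i ∈ S, ∀ i', i' ∉ S → r i' ≤ r i := by
  induction m with
  | zero => exact ⟨∅, by simp⟩
  | succ m ih =>
    obtain ⟨S, hS, h⟩ := ih (by omega)
    have hne : (Sᶜ).Nonempty := by
      rw [← Finset.card_pos, Finset.card_compl]; omega
    obtain ⟨a, ha, hmax⟩ := Finset.exists_max_image Sᶜ r hne
    rw [Finset.mem_compl] at ha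
    refine ⟨insert a S, by rw [card_insert_of_notMem ha, hS], ?_⟩
    intro i hi i' hi'
    simp only [Finset.mem_insert, not_or] at hi hi'
    rcases hi with rfl | hi
    · exact hmax i' (by simpa using hi'.2)
    · exact h i hi i' hi'.2

theorem gale_ryser {ι κ : Type*} [DecidableEq ι] [Fintype ι] [DecidableEq κ] (c : κ → ℕ)
    (s : Finset κ) : ∀ r : ι → ℕ, ∑ j ∈ s, c j = ∑ i, r i →
    (∀ T ⊆ s, ∑ j ∈ T, c j ≤ ∑ i, min (r i) T.card) →
    ∃ M : κ → Finset ι, (∀ j ∈ s, (M j).card = c j) ∧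
      ∀ i, (s.filter (fun j => i ∈ M j)).card = r i := by
  induction s using Finset.induction_on with
  | empty =>
    intro r h _
    refine ⟨fun _ => ∅, by simp, ?_⟩
    intro i
    simp only [Finset.sum_empty] at h
    have := (Finset.sum_eq_zero_iff.mp h.symm) i (mem_univ i)
    simp [this]
  | insert a s ha ih =>
    intro r hsum hdom
    -- choose the top rows
    have h1 := hdom {a} (by simp)
    simp only [sum_singleton, card_singleton] at h1
    have hle : c a ≤ Fintype.card ι := by
      refine h1.trans ?_
      calc ∑ i, min (r i) 1 ≤ ∑ i : ι, 1 := Finset.sum_le_sum (fun i _ => min_le_right _ _)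
        _ = _ := by simp
    obtain ⟨S, hS, htop⟩ := exists_top r (c a) hle
    have hpos : ∀ i ∈ S, 1 ≤ r i := by
      intro i hi
      by_contra hlt
      have hz : ∀ i', i' ∉ S → r i' = 0 := fun i' hi' => by
        have := htop i hi i' hi'; omega
      have : ∑ i', min (r i') 1 < ∑ i', (if i' ∈ S then 1 else 0) := by
        apply Finset.sum_lt_sum
        · intro i' _
          split_ifs with h
          · exact min_le_right _ _
          · simp [hz i' h]
        · exact ⟨i, mem_univ i, by simp [hi]; omega⟩
      simp at this
      omega
    have hsplit : ∀ i, r i = (r i - if i ∈ S then 1 else 0) + (if i ∈ S then 1 else 0) := by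
      intro i
      split_ifs with h
      · have := hpos i h; omega
      · simp
    have hind : ∑ i, (if i ∈ S then 1 else 0) = c a := by simp [hS]
    obtain ⟨M, hM1, hM2⟩ := ih (fun i => r i - if i ∈ S then 1 else 0) (by
      rw [sum_insert ha] at hsum
      rw [Finset.sum_congr rfl (fun i _ => hsplit i), sum_add_distrib, hind] at hsum
      omega) (by
      intro T hT
      have haT : a ∉ T := fun h => ha (hT h)
      by_cases hc : ∃ i, i ∉ S ∧ T.card + 1 ≤ r i
      · obtain ⟨i0, hi0, hr0⟩ := hc
        refine (hdom T (hT.trans (subset_insert _ _))).trans (Finset.sum_le_sum ?_)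
        intro i _
        split_ifs with h
        · have := htop i h i0 hi0
          omega
        · simp
      · push Not at hc
        have h2 := hdom (insert a T) (insert_subset_insert _ hT)
        rw [sum_insert haT, card_insert_of_notMem haT] at h2
        have h3 : ∑ i, min (r i) (T.card + 1) ≤
            ∑ i, (min (r i - if i ∈ S then 1 else 0) T.card + if i ∈ S then 1 else 0) := by
          apply Finset.sum_le_sum
          intro i _
          split_ifs with h
          · omega
          · have := hc i h
            omega
        rw [sum_add_distrib, hind] at h3
        omega)
    refine ⟨Function.update M a S, ?_, ?_⟩
    · intro j hj
      by_cases h : j = a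
      · subst h; simp [hS]
      · rw [Function.update_of_ne h]
        exact hM1 j (by simpa [h] using hj)
    · intro i
      have hcongr : s.filter (fun j => i ∈ Function.update M a S j) =
          s.filter (fun j => i ∈ M j) := by
        apply Finset.filter_congr
        intro j hj
        have hja : j ≠ a := by
          rintro rfl
          exact ha hj
        rw [Function.update_of_ne hja]
      rw [filter_insert, hsplit i, ← hM2 i]
      simp only [Function.update_self, hcongr]
      split_ifs with h
      · rw [card_insert_of_notMem (by simp [ha])]
      · simp

theorem inf_eq_bot_iff_inter {n : ℕ} (σ τ : SetPart n) :
    σ ⊓ τ = ⊥ ↔ ∀ A ∈ σ.parts, ∀ B ∈ τ.parts, (A ∩ B).card ≤ 1 := by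
  constructor
  · intro h A hA B hB
    by_cases hne : A ∩ B = ∅
    · simp [hne]
    · have hmem : A ∩ B ∈ (σ ⊓ τ).parts := by
        rw [Finpartition.parts_inf, mem_erase]
        exact ⟨hne, mem_image.mpr ⟨(A, B), by simp [hA, hB], rfl⟩⟩
      rw [h, Finpartition.mem_bot_iff] at hmem
      obtain ⟨a, -, ha⟩ := hmem
      rw [← ha, card_singleton]
  · intro h
    rw [← le_bot_iff]
    intro C hC
    rw [Finpartition.parts_inf, mem_erase] at hC
    obtain ⟨hne, hC⟩ := hC
    obtain ⟨⟨A, B⟩, hAB, rfl⟩ := mem_image.mp hC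
    rw [mem_product] at hAB
    have h1 := h A hAB.1 B hAB.2
    obtain ⟨x, hx⟩ := Finset.nonempty_iff_ne_empty.mpr hne
    refine ⟨{x}, Finpartition.mem_bot_iff.mpr ⟨x, mem_univ x, rfl⟩, ?_⟩
    intro y hy
    rw [mem_singleton]
    exact Finset.card_le_one.mp h1 y hy x hx

theorem sum_conjPart {n : ℕ} (lam : Nat.Partition n) (k : ℕ) :
    ∑ i ∈ range k, conjPart lam i = (lam.parts.map (fun p => min p k)).sum := by
  unfold conjPart
  induction lam.parts using Multiset.induction_on with
  | empty => simp
  | cons a s ih =>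
    rw [Multiset.map_cons, Multiset.sum_cons, ← ih]
    have : ∀ i, (Multiset.filter (fun p => i + 1 ≤ p) (a ::ₘ s)).card =
        (if i < a then 1 else 0) + (Multiset.filter (fun p => i + 1 ≤ p) s).card := by
      intro i
      rw [Multiset.filter_cons, Multiset.card_add]
      split_ifs <;> simp_all
    simp only [this, sum_add_distrib]
    congr 1
    rw [← card_filter]
    have : (range k).filter (fun i => i < a) = range (min a k) := by
      ext i; simp; tauto
    rw [this, card_range]

theorem sublist_sum_le {l : List ℕ} (hl : l.Pairwise (· ≥ ·)) :
    ∀ {l' : List ℕ}, l'.Sublist l → l'.sum ≤ (l.take l'.length).sum := by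
  induction l with
  | nil => intro l' h; simp [List.sublist_nil.mp h]
  | cons a l ih =>
    intro l' h
    rw [List.pairwise_cons] at hl
    cases l' with
    | nil => simp
    | cons b l' =>
      have hb : b ≤ a := by
        have hb : b ∈ a :: l := h.subset (by simp)
        rcases List.mem_cons.mp hb with rfl | hb
        · exact le_rfl
        · exact hl.1 b hb
      have h' : l'.Sublist l := by
        cases h with
        | cons _ h => exact (List.sublist_cons_self _ _).trans h
        | cons_cons _ h => exact h
      have := ih hl.2 h'
      simp only [List.sum_cons, List.length_cons, List.take_succ_cons]
      omega

theorem le_topSum {n : ℕ} (mu : Nat.Partition n) (u : Multiset ℕ) (hu : u ≤ mu.parts) :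
    u.sum ≤ topSum mu u.card := by
  unfold topSum
  have hp : ∀ v : Multiset ℕ, ((v.sort (· ≤ ·)).reverse).Pairwise (· ≥ ·) := by
    intro v
    rw [List.pairwise_reverse]
    exact Multiset.pairwise_sort v (· ≤ ·)
  have hc : ∀ v : Multiset ℕ, (((v.sort (· ≤ ·)).reverse : List ℕ) : Multiset ℕ) = v := by
    intro v
    rw [Multiset.coe_reverse, Multiset.sort_eq]
  have hsub : ((u.sort (· ≤ ·)).reverse).Sublist ((mu.parts.sort (· ≤ ·)).reverse) := by
    apply List.sublist_of_subperm_of_pairwise (r := (· ≥ ·)) _ (hp _) (hp _)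
    rw [← Multiset.coe_le, hc, hc]
    exact hu
  have h := sublist_sum_le (hp _) hsub
  have h1 : ((u.sort (· ≤ ·)).reverse).sum = u.sum := by
    rw [← Multiset.sum_coe, hc]
  have h2 : ((u.sort (· ≤ ·)).reverse).length = u.card := by
    rw [← Multiset.coe_card, hc]
  rw [h1, h2] at h
  exact h

theorem exists_le_of_le_map {α : Type*} [DecidableEq α] (f : α → ℕ) (t : Multiset α) :
    ∀ s, s ≤ t.map f → ∃ u ≤ t, u.map f = s := by
  intro s h
  induction t using Quotient.inductionOn with
  | _ l =>
    induction s using Quotient.inductionOn with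
    | _ l' =>
      obtain ⟨l'', hperm, hsub⟩ := (Multiset.coe_le (l₂ := l.map f)).mp h
      obtain ⟨m, hm, rfl⟩ := List.sublist_map_iff.mp hsub
      exact ⟨m, Multiset.coe_le.mpr hm.subperm, Multiset.coe_eq_coe.mpr hperm⟩

theorem topSum_le_of_meet {n : ℕ} (σ τ : SetPart n) (h : σ ⊓ τ = ⊥) :
    DomLEConj (shape τ) (shape σ) := by
  intro k
  rw [sum_conjPart]
  rw [inf_eq_bot_iff_inter] at h
  have hle : ((((shape τ).parts.sort (· ≤ ·)).reverse.take k : List ℕ) : Multiset ℕ) ≤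
      τ.parts.val.map Finset.card := by
    have : τ.parts.val.map Finset.card =
        (((shape τ).parts.sort (· ≤ ·)).reverse : List ℕ) := by
      rw [Multiset.coe_reverse, Multiset.sort_eq]; rfl
    rw [this]
    exact Multiset.coe_le.mpr (List.take_sublist _ _).subperm
  obtain ⟨u, hu, hmap⟩ := exists_le_of_le_map _ _ _ hle
  have hnd : u.Nodup := Multiset.nodup_of_le hu τ.parts.nodup
  let T : Finset (Finset (Fin n)) := ⟨u, hnd⟩
  have hT : T ⊆ τ.parts := Finset.val_le_iff.mp hu
  have hTk : T.card ≤ k := by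
    have := congrArg Multiset.card hmap
    rw [Multiset.card_map, Multiset.coe_card, List.length_take] at this
    change u.card ≤ k
    omega
  have hsum : topSum (shape τ) k = ∑ B ∈ T, B.card := by
    unfold topSum
    rw [← Multiset.sum_coe, ← hmap]; rfl
  have hdisj : ∀ A : Finset (Fin n), ∑ B ∈ T, (A ∩ B).card ≤ A.card := by
    intro A
    rw [← Finset.card_biUnion]
    · apply card_le_card
      intro x hx
      rw [mem_biUnion] at hx
      obtain ⟨B, _, hx⟩ := hx
      exact (mem_inter.mp hx).1
    · intro B hB B' hB' hne
      have := τ.disjoint (hT hB) (hT hB') hne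
      exact Disjoint.mono inter_subset_right inter_subset_right this
  have hcard : ∀ B : Finset (Fin n), B.card = ∑ A ∈ σ.parts, (A ∩ B).card := by
    intro B
    rw [← Finset.card_biUnion]
    · rw [← Finset.biUnion_inter]
      have := σ.biUnion_parts
      change σ.parts.biUnion (fun x => x) = _ at this
      rw [this, univ_inter]
    · intro A hA A' hA' hne
      have := σ.disjoint hA hA' hne
      exact Disjoint.mono inter_subset_left inter_subset_left this
  rw [hsum]
  calc ∑ B ∈ T, B.card = ∑ B ∈ T, ∑ A ∈ σ.parts, (A ∩ B).card :=
        Finset.sum_congr rfl (fun B _ => hcard B)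
    _ = ∑ A ∈ σ.parts, ∑ B ∈ T, (A ∩ B).card := sum_comm
    _ ≤ ∑ A ∈ σ.parts, min A.card k := by
        apply sum_le_sum
        intro A hA
        apply le_min (hdisj A)
        calc ∑ B ∈ T, (A ∩ B).card ≤ ∑ B ∈ T, 1 := sum_le_sum (fun B hB => h A hA B (hT hB))
          _ ≤ k := by simpa using hTk
    _ = _ := by
        change _ = (Multiset.map _ (σ.parts.val.map Finset.card)).sum
        rw [Multiset.map_map]; rfl

theorem exists_fiber_part {n : ℕ} {ι : Type*} [DecidableEq ι] [Fintype ι] (f : Fin n → ι)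
    (hf : ∀ i, 0 < (univ.filter (fun x => f x = i)).card) :
    ∃ σ : SetPart n, (∀ A ∈ σ.parts, ∃ i, A = univ.filter (fun x => f x = i)) ∧
      (shape σ).parts = univ.val.map (fun i => (univ.filter (fun x => f x = i)).card) := by
  have hinj : Function.Injective (fun i : ι => univ.filter (fun x => f x = i)) := by
    intro i i' h
    obtain ⟨x, hx⟩ := Finset.card_pos.mp (hf i)
    have hx' := hx
    change univ.filter (fun x => f x = i) = univ.filter (fun x => f x = i') at h
    rw [h] at hx'
    simp at hx hx'
    rw [← hx, hx']
  refine ⟨Finpartition.ofExistsUnique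
    (univ.map ⟨fun i : ι => univ.filter (fun x => f x = i), hinj⟩) ?_ ?_ ?_, ?_, ?_⟩
  · intro p _; exact subset_univ p
  · intro x _
    refine ⟨univ.filter (fun y => f y = f x), ?_, ?_⟩
    · refine ⟨mem_map.mpr ⟨f x, mem_univ _, rfl⟩, by simp⟩
    · rintro B ⟨hB, hx⟩
      obtain ⟨i, _, rfl⟩ := mem_map.mp hB
      have : f x = i := by simpa using hx
      rw [this]; rfl
  · intro h
    obtain ⟨i, _, hi⟩ := mem_map.mp h
    have := hf i
    change univ.filter (fun x => f x = i) = ∅ at hi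
    rw [hi] at this
    simp at this
  · intro A hA
    obtain ⟨i, _, rfl⟩ := mem_map.mp hA
    exact ⟨i, rfl⟩
  · change Multiset.map Finset.card (Multiset.map _ univ.val) = _
    rw [Multiset.map_map]; rfl

theorem exists_index {n : ℕ} (mu : Nat.Partition n) :
    ∃ (m : ℕ) (c : Fin m → ℕ), univ.val.map c = mu.parts := by
  refine ⟨mu.parts.toList.length, fun i => mu.parts.toList.get i, ?_⟩
  rw [Fin.univ_val_map, List.ofFn_get, Multiset.coe_toList]

theorem exists_of_dom {n : ℕ} (lam mu : Nat.Partition n) (h : DomLEConj mu lam) :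
    ∃ σ τ : SetPart n, shape σ = lam ∧ shape τ = mu ∧ σ ⊓ τ = ⊥ := by
  obtain ⟨p, r, hr⟩ := exists_index lam
  obtain ⟨q, c, hc⟩ := exists_index mu
  have hrsum : ∑ i, r i = n := by
    rw [← lam.parts_sum, ← hr]; rfl
  have hcsum : ∑ j, c j = n := by
    rw [← mu.parts_sum, ← hc]; rfl
  have hrpos : ∀ i, 0 < r i := fun i => lam.parts_pos (by
    rw [← hr]; exact Multiset.mem_map_of_mem r (mem_univ i))
  have hcpos : ∀ j, 0 < c j := fun j => mu.parts_pos (by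
    rw [← hc]; exact Multiset.mem_map_of_mem c (mem_univ j))
  obtain ⟨M, hM1, hM2⟩ := gale_ryser c univ r (hcsum.trans hrsum.symm) (by
    intro T _
    have h1 := le_topSum mu (T.val.map c) (by
      rw [← hc]
      exact Multiset.map_le_map (Finset.val_le_iff.mpr (subset_univ T)))
    rw [Multiset.card_map] at h1
    have h2 := h T.card
    rw [sum_conjPart, ← hr, Multiset.map_map] at h2
    exact h1.trans h2)
  let E : Finset (Fin q × Fin p) := univ.filter (fun x => x.2 ∈ M x.1)
  have hrow : ∀ i, (E.filter (fun x => x.2 = i)).card = r i := by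
    intro i
    rw [← hM2 i]
    symm
    apply card_bij (fun j _ => (j, i))
    · intro j hj; simpa [E] using hj
    · intro j _ j' _ hjj; exact (Prod.mk.inj hjj).1
    · rintro ⟨j, i'⟩ hx
      simp only [E, mem_filter, mem_univ, true_and] at hx
      obtain ⟨hx, rfl⟩ := hx
      exact ⟨j, by simpa using hx, rfl⟩
  have hcol : ∀ j, (E.filter (fun x => x.1 = j)).card = c j := by
    intro j
    rw [← hM1 j (mem_univ j)]
    symm
    apply card_bij (fun i _ => (j, i))
    · intro i hi; simpa [E] using hi
    · intro j _ j' _ hjj; exact (Prod.mk.inj hjj).2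
    · rintro ⟨j', i⟩ hx
      simp only [E, mem_filter, mem_univ, true_and] at hx
      obtain ⟨hx, rfl⟩ := hx
      exact ⟨i, by simpa using hx, rfl⟩
  have hE : E.card = n := by
    rw [← hcsum, Finset.card_eq_sum_card_fiberwise (f := Prod.fst) (t := univ) (by simp)]
    exact Finset.sum_congr rfl (fun j _ => hcol j)
  let e : E ≃ Fin n := E.equivFinOfCardEq hE
  have hfib : ∀ P : Fin q × Fin p → Prop, [DecidablePred P] →
      (univ.filter (fun x : Fin n => P (e.symm x).1)).card = (E.filter P).card := by
    intro P _
    apply card_bij (fun x _ => (e.symm x).1)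
    · intro x hx
      simp only [mem_filter, mem_univ, true_and] at hx
      exact mem_filter.mpr ⟨(e.symm x).2, hx⟩
    · intro x _ y _ hxy
      exact e.symm.injective (Subtype.ext hxy)
    · intro y hy
      rw [mem_filter] at hy
      exact ⟨e ⟨y, hy.1⟩, by simpa using hy.2, by simp⟩
  have hrow' : ∀ i, (univ.filter (fun x : Fin n => (e.symm x).1.2 = i)).card = r i :=
    fun i => (hfib (fun x => x.2 = i)).trans (hrow i)
  have hcol' : ∀ j, (univ.filter (fun x : Fin n => (e.symm x).1.1 = j)).card = c j :=
    fun j => (hfib (fun x => x.1 = j)).trans (hcol j)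
  obtain ⟨σ, hσ1, hσ2⟩ := exists_fiber_part (fun x : Fin n => (e.symm x).1.2)
    (fun i => by rw [hrow']; exact hrpos i)
  obtain ⟨τ, hτ1, hτ2⟩ := exists_fiber_part (fun x : Fin n => (e.symm x).1.1)
    (fun j => by rw [hcol']; exact hcpos j)
  refine ⟨σ, τ, Nat.Partition.ext ?_, Nat.Partition.ext ?_, ?_⟩
  · rw [hσ2, ← hr]; simp only [hrow']
  · rw [hτ2, ← hc]; simp only [hcol']
  · rw [inf_eq_bot_iff_inter]
    intro A hA B hB
    obtain ⟨i, rfl⟩ := hσ1 A hA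
    obtain ⟨j, rfl⟩ := hτ1 B hB
    rw [Finset.card_le_one]
    intro x hx y hy
    simp only [mem_inter, mem_filter, mem_univ, true_and] at hx hy
    apply e.symm.injective
    apply Subtype.ext
    exact Prod.ext (hx.2.trans hy.2.symm) (hx.1.trans hy.1.symm)

/-- There are set partitions `σ, τ ∈ Π_n` of shapes `λ` and `μ` with
`σ ∧ τ = 0̂` if and only if the conjugate `λ'` dominates `μ`. -/
theorem exists_shapes_meet_bot_iff (n : ℕ) (lam mu : Nat.Partition n) :
    (∃ σ τ : SetPart n, shape σ = lam ∧ shape τ = mu ∧ σ ⊓ τ = ⊥) ↔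
      DomLEConj mu lam := by
  constructor
  · rintro ⟨σ, τ, rfl, rfl, h⟩
    exact topSum_le_of_meet σ τ h
  · exact exists_of_dom lam mu
end

section
/- Let λ be a partition of n. The antichain fi(λ) in the partition lattice Π_n is itself a blocker (i.e. fi(λ) = C* for some antichain C in Π_n, equivalently fi(λ)** = fi(λ)) if and only if λ is a hook shape (p, 1^{n-p}) for some p. -/
open Finset

/-- The blocker of a set `A` in a poset with bottom element: the minimal elements among
those having a common atom with every member of `A`. -/
def blocker {P : Type*} [PartialOrder P] [OrderBot P] (A : Set P) : Set P :=
  {x | (∀ a ∈ A, ∃ l : P, IsAtom l ∧ l ≤ x ∧ l ≤ a) ∧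
    ∀ y : P, (∀ a ∈ A, ∃ l : P, IsAtom l ∧ l ≤ y ∧ l ≤ a) → y ≤ x → y = x}

/-- An antichain in a poset with bottom element, in the sense of Björner–Hultman:
a nonempty set avoiding `⊥` whose elements are pairwise incomparable. -/
def IsAnti {P : Type*} [PartialOrder P] [OrderBot P] (A : Set P) : Prop :=
  A.Nonempty ∧ ⊥ ∉ A ∧ IsAntichain (· ≤ ·) A

/-- The fiber under the shape map of a set `S` of number partitions: all set
partitions whose shape lies in `S`. -/
def fi {n : ℕ} (S : Set (Nat.Partition n)) : Set (SetPart n) :=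
  {σ | shape σ ∈ S}

/-- The hook-shaped number partition `(p, 1^{n-p})`: one part equal to `p` and
`n - p` parts equal to `1`. -/
def hook (n p : ℕ) (hp : 0 < p) (hpn : p ≤ n) : Nat.Partition n where
  parts := p ::ₘ Multiset.replicate (n - p) 1
  parts_pos := by
    intro i hi
    simp only [Multiset.mem_cons, Multiset.mem_replicate] at hi
    rcases hi with rfl | ⟨-, rfl⟩
    · exact hp
    · exact one_pos
  parts_sum := by
    simp only [Multiset.sum_cons, Multiset.sum_replicate, smul_eq_mul, mul_one]
    omega

section helpers

variable {n : ℕ}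

/-- A partition blocks a set if it shares a pair with each member. -/
def Hits (C : Set (SetPart n)) (x : SetPart n) : Prop :=
  ∀ a ∈ C, ∃ l : SetPart n, IsAtom l ∧ l ≤ x ∧ l ≤ a

lemma le_iff_part (P Q : SetPart n) :
    P ≤ Q ↔ ∀ a b, P.part a = P.part b → Q.part a = Q.part b := by
  constructor
  · intro h a b hab
    obtain ⟨u, hu, hsub⟩ := h (P.part_mem.2 (mem_univ a))
    have ha : a ∈ u := hsub (P.mem_part (mem_univ a))
    have hb : b ∈ u := hsub (by rw [hab]; exact P.mem_part (mem_univ b))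
    rw [Q.part_eq_of_mem hu ha, Q.part_eq_of_mem hu hb]
  · intro h t ht
    obtain ⟨a, ha⟩ := P.nonempty_of_mem_parts ht
    refine ⟨Q.part a, Q.part_mem.2 (mem_univ a), fun b hb => ?_⟩
    rw [Q.mem_part_iff_part_eq_part (mem_univ _) (mem_univ _)]
    apply h
    rw [P.part_eq_of_mem ht ha, P.part_eq_of_mem ht hb]

/-- The partition of `Fin n` into the fibers of `f`. -/
def kerP {κ : Type*} [DecidableEq κ] (f : Fin n → κ) : SetPart n :=
  Finpartition.ofSetSetoid (Setoid.ker f) univ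

lemma kerP_part {κ : Type*} [DecidableEq κ] (f : Fin n → κ) (a : Fin n) :
    (kerP f).part a = univ.filter (fun b => f b = f a) := by
  ext b
  rw [kerP, Finpartition.mem_part_ofSetSetoid_iff_rel]
  simp [Setoid.ker_def, eq_comm]

lemma kerP_rel {κ : Type*} [DecidableEq κ] (f : Fin n → κ) (a b : Fin n) :
    (kerP f).part a = (kerP f).part b ↔ f a = f b := by
  rw [← Finpartition.mem_part_iff_part_eq_part _ (mem_univ _) (mem_univ _), kerP_part]
  simp

lemma part_mem_univ (x : SetPart n) (a : Fin n) : x.part a ∈ x.parts :=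
  x.part_mem.2 (mem_univ a)

lemma parts_eq_image (x : SetPart n) : x.parts = univ.image x.part := by
  ext t
  simp only [mem_image, mem_univ, true_and]
  constructor
  · intro ht
    obtain ⟨a, ha⟩ := x.nonempty_of_mem_parts ht
    exact ⟨a, x.part_eq_of_mem ht ha⟩
  · rintro ⟨a, rfl⟩
    exact part_mem_univ x a

lemma kerP_parts {κ : Type*} [DecidableEq κ] (f : Fin n → κ) :
    (kerP f).parts = (univ.image f).image (fun k => univ.filter (fun b => f b = k)) := by
  rw [parts_eq_image, image_image]
  congr 1
  funext a
  exact kerP_part f a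

lemma fiber_injOn {κ : Type*} [DecidableEq κ] (f : Fin n → κ) :
    Set.InjOn (fun k => univ.filter (fun b => f b = k)) (univ.image f : Finset κ) := by
  intro k hk k' _ h
  simp only [coe_image, coe_univ, Set.image_univ, Set.mem_range] at hk
  obtain ⟨a, rfl⟩ := hk
  have : a ∈ univ.filter (fun b => f b = f a) := by simp
  simp only at h
  rw [h] at this
  simpa using this

lemma shape_kerP {κ : Type*} [DecidableEq κ] (f : Fin n → κ) :
    (shape (kerP f)).parts =
      (univ.image f).val.map (fun k => #(univ.filter (fun b => f b = k))) := by
  show (kerP f).parts.val.map Finset.card = _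
  rw [kerP_parts, image_val_of_injOn (fiber_injOn f), Multiset.map_map]
  rfl

lemma card_kerP {κ : Type*} [DecidableEq κ] (f : Fin n → κ) :
    #(kerP f).parts = #(univ.image f) := by
  rw [kerP_parts, card_image_of_injOn (fiber_injOn f)]

lemma eq_bot_of_part (x : SetPart n) (h : ∀ a b, x.part a = x.part b → a = b) : x = ⊥ := by
  refine le_antisymm ?_ bot_le
  rw [le_iff_part]
  intro a b hab
  rw [h a b hab]

lemma bot_part {a b : Fin n} (h : (⊥ : SetPart n).part a = (⊥ : SetPart n).part b) : a = b := by
  have := (le_iff_part ⊥ (kerP (fun i : Fin n => i))).1 bot_le a b h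
  rwa [kerP_rel] at this

lemma atom_iff (x c : SetPart n) : (∃ l : SetPart n, IsAtom l ∧ l ≤ x ∧ l ≤ c) ↔
    ∃ a b, a ≠ b ∧ x.part a = x.part b ∧ c.part a = c.part b := by
  constructor
  · rintro ⟨l, hl, hx, hc⟩
    by_contra! H
    apply hl.1
    apply eq_bot_of_part
    intro a b hab
    by_contra hne
    exact H a b hne ((le_iff_part _ _).1 hx a b hab) ((le_iff_part _ _).1 hc a b hab)
  · rintro ⟨a, b, hne, hx, hc⟩
    set g : SetPart n := kerP (fun i => (x.part i, c.part i)) with hg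
    have hgb : g ≠ ⊥ := by
      intro h
      have h1 : g.part a = g.part b := by rw [hg, kerP_rel, hx, hc]
      rw [h] at h1
      exact hne (bot_part h1)
    obtain h | ⟨l, hl, hlg⟩ := IsAtomic.eq_bot_or_exists_atom_le g
    · exact absurd h hgb
    · refine ⟨l, hl, hlg.trans ?_, hlg.trans ?_⟩ <;>
      · rw [le_iff_part]
        intro i j hij
        rw [hg, kerP_rel] at hij
        simp only [Prod.mk.injEq] at hij
        tauto

lemma hits_mono {C : Set (SetPart n)} {x y : SetPart n} (h : x ≤ y) (hx : Hits C x) :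
    Hits C y := fun a ha => by
  obtain ⟨l, h1, h2, h3⟩ := hx a ha
  exact ⟨l, h1, h2.trans h, h3⟩

lemma exists_min_le (Q : SetPart n → Prop) (y : SetPart n) (hy : Q y) :
    ∃ z, z ≤ y ∧ Q z ∧ ∀ w, Q w → w ≤ z → w = z := by
  obtain ⟨z, hzy, hz⟩ := (Set.toFinite {x | Q x}).isPWO.exists_le_minimal (a := y) hy
  exact ⟨z, hzy, hz.1, fun w hw hwz => le_antisymm hwz (hz.2 hw hwz)⟩

lemma eq_of_le_of_card {z y : SetPart n} (h : z ≤ y) (hc : #z.parts = #y.parts) : z = y := by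
  refine le_antisymm h ?_
  rw [le_iff_part]
  have hspec : ∀ t : Finset (Fin n), ∃ u : Finset (Fin n), t ∈ z.parts → u ∈ y.parts ∧ t ⊆ u := by
    intro t
    by_cases ht : t ∈ z.parts
    · obtain ⟨u, hu, hs⟩ := h ht
      exact ⟨u, fun _ => ⟨hu, hs⟩⟩
    · exact ⟨∅, fun h => absurd h ht⟩
  choose φ hφ using hspec
  have hφp : ∀ a, φ (z.part a) = y.part a := fun a => by
    obtain ⟨h1, h2⟩ := hφ _ (part_mem_univ z a)
    exact (y.part_eq_of_mem h1 (h2 (z.mem_part (mem_univ a)))).symm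
  have himg : z.parts.image φ = y.parts := by
    rw [parts_eq_image, parts_eq_image y, image_image]
    congr 1
    funext a
    exact hφp a
  have hinj : Set.InjOn φ z.parts := by
    apply card_image_iff.1
    rw [himg, hc]
  intro a b hab
  apply hinj (part_mem_univ z a) (part_mem_univ z b)
  rw [hφp, hφp, hab]

lemma card_parts_of_shape {x y : SetPart n} (h : shape x = shape y) : #x.parts = #y.parts := by
  have := congrArg (fun l => Multiset.card l.parts) h
  simpa [shape] using this

lemma shape_hook (x : SetPart n) (A : Finset (Fin n)) (hA : A ∈ x.parts)
    (h1 : ∀ B ∈ x.parts, B ≠ A → #B = 1) (h0 : 0 < #A) (hn : #A ≤ n) :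
    shape x = hook n #A h0 hn := by
  have key : (shape x).parts = #A ::ₘ Multiset.replicate (#(x.parts.erase A)) 1 := by
    show x.parts.val.map Finset.card = _
    conv_lhs => rw [← insert_erase hA]
    rw [insert_val_of_notMem (notMem_erase _ _), Multiset.map_cons]
    congr 1
    rw [Multiset.eq_replicate]
    refine ⟨by rw [Multiset.card_map]; rfl, ?_⟩
    intro k hk
    simp only [Multiset.mem_map, mem_val, mem_erase] at hk
    obtain ⟨B, ⟨hB, hB'⟩, rfl⟩ := hk
    exact h1 B hB' hB
  have hs := (shape x).parts_sum
  rw [key] at hs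
  simp only [Multiset.sum_cons, Multiset.sum_replicate, smul_eq_mul, mul_one] at hs
  apply Nat.Partition.ext
  rw [key]
  show _ = #A ::ₘ Multiset.replicate (n - #A) 1
  congr 2
  omega

lemma of_shape_hook (x : SetPart n) (p : ℕ) (hp : 0 < p) (hpn : p ≤ n)
    (h : shape x = hook n p hp hpn) :
    ∃ A ∈ x.parts, #A = p ∧ ∀ B ∈ x.parts, B ≠ A → #B = 1 := by
  have hs : x.parts.val.map Finset.card = p ::ₘ Multiset.replicate (n - p) 1 :=
    congrArg Nat.Partition.parts h
  have : p ∈ x.parts.val.map Finset.card := by rw [hs]; simp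
  simp only [Multiset.mem_map, mem_val] at this
  obtain ⟨A, hA, hAp⟩ := this
  refine ⟨A, hA, hAp, fun B hB hBA => ?_⟩
  rw [← insert_erase hA, insert_val_of_notMem (notMem_erase _ _), Multiset.map_cons, hAp,
    Multiset.cons_inj_right] at hs
  have hm : #B ∈ (x.parts.erase A).val.map Finset.card :=
    Multiset.mem_map_of_mem _ (by rw [mem_val]; exact mem_erase.2 ⟨hBA, hB⟩)
  rw [hs] at hm
  exact Multiset.eq_of_mem_replicate hm

lemma hits_iff (p : ℕ) (hp : 2 ≤ p) (C : Set (SetPart n))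
    (hC : ∀ c : SetPart n, c ∈ C → #c.parts < p)
    (hC' : ∀ c : SetPart n, #c.parts < p → ∃ d ∈ C, d ≤ c) (x : SetPart n) :
    Hits C x ↔ ∃ B ∈ x.parts, p ≤ #B := by
  constructor
  · intro h
    by_contra! H
    have hf : ∀ B : Finset (Fin n), ∃ f : Fin n → Fin (p - 1),
        B ∈ x.parts → Set.InjOn f B := by
      intro B
      by_cases hB : B ∈ x.parts
      · have hlt := H B hB
        have hlt' : #B ≤ p - 1 := by omega
        refine ⟨fun i => if hi : i ∈ B then Fin.castLE hlt' (B.equivFin ⟨i, hi⟩)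
          else ⟨0, by omega⟩, fun _ i hi j hj hij => ?_⟩
        have hi' : i ∈ B := hi
        have hj' : j ∈ B := hj
        simp only [hi', hj', dif_pos] at hij
        simpa using hij
      · exact ⟨fun _ => ⟨0, by omega⟩, fun h => absurd h hB⟩
    choose f hf using hf
    set c : SetPart n := kerP (fun i => f (x.part i) i) with hc
    have hcp : #c.parts < p := by
      rw [hc, card_kerP]
      have := card_le_univ (univ.image (fun i => f (x.part i) i))
      rw [Fintype.card_fin] at this
      omega
    obtain ⟨d, hd, hdc⟩ := hC' c hcp
    obtain ⟨a, b, hne, h1, h2⟩ := (atom_iff _ _).1 (h d hd)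
    have h3 := (le_iff_part _ _).1 hdc a b h2
    rw [hc, kerP_rel, h1] at h3
    apply hne
    refine hf (x.part b) (part_mem_univ x b) ?_ (x.mem_part (mem_univ b)) h3
    rw [← h1]
    exact x.mem_part (mem_univ a)
  · rintro ⟨B, hB, hpB⟩ c hc
    rw [atom_iff]
    obtain ⟨a, ha, b, hb, hne, hab⟩ :=
      exists_ne_map_eq_of_card_lt_of_maps_to (s := B) (t := c.parts) (f := c.part)
        (lt_of_lt_of_le (hC c hc) hpB) (fun a _ => part_mem_univ c a)
    exact ⟨a, b, hne, by rw [x.part_eq_of_mem hB ha, x.part_eq_of_mem hB hb], hab⟩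

lemma backward (p : ℕ) (hp : 2 ≤ p) (hpn : p ≤ n) :
    ∃ C : Set (SetPart n), IsAnti C ∧ blocker C = fi {hook n p (Nat.lt_of_lt_of_le Nat.two_pos hp) hpn} := by
  set C : Set (SetPart n) := {c | #c.parts < p ∧ ∀ w : SetPart n, #w.parts < p → w ≤ c → w = c}
    with hCdef
  have hC' : ∀ c : SetPart n, #c.parts < p → ∃ d ∈ C, d ≤ c := by
    intro c hc
    obtain ⟨z, hz, h1, h2⟩ := exists_min_le (fun c => #c.parts < p) c hc
    exact ⟨z, ⟨h1, h2⟩, hz⟩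
  have hits := hits_iff p hp C (fun c hc => hc.1) hC'
  refine ⟨C, ⟨?_, ?_, ?_⟩, ?_⟩
  · have : #(kerP (fun _ : Fin n => ())).parts < p := by
      rw [card_kerP]
      have := card_le_univ (univ.image (fun _ : Fin n => ()))
      simp only [Fintype.card_unit] at this
      omega
    obtain ⟨d, hd, -⟩ := hC' _ this
    exact ⟨d, hd⟩
  · intro h
    have := h.1
    rw [Finpartition.card_bot, card_univ, Fintype.card_fin] at this
    omega
  · intro a ha b hb hne hab
    exact hne (hb.2 a ha.1 hab)
  · ext x
    constructor
    · rintro ⟨hx, hmin⟩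
      obtain ⟨B, hB, hpB⟩ := (hits x).1 hx
      obtain ⟨A, hAB, hA⟩ := exists_subset_card_eq hpB
      set z : SetPart n := kerP (fun i => if i ∈ A then none else some i) with hz
      have hAne : A.Nonempty := card_pos.1 (by omega)
      obtain ⟨a, ha⟩ := hAne
      have hAz : A ∈ z.parts := by
        have : z.part a = A := by
          rw [hz, kerP_part]
          ext i
          by_cases hi : i ∈ A <;> simp [ha, hi]
        rw [← this]
        exact part_mem_univ z a
      have hzx : z ≤ x := by
        rw [le_iff_part]
        intro i j hij
        rw [hz, kerP_rel] at hij
        by_cases hi : i ∈ A <;> by_cases hj : j ∈ A <;> simp [hi, hj] at hij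
        · rw [x.part_eq_of_mem hB (hAB hi), x.part_eq_of_mem hB (hAB hj)]
        · rw [hij]
      have hzeq : z = x := hmin z ((hits z).2 ⟨A, hAz, hA.ge⟩) hzx
      show shape x = _
      rw [← hzeq]
      subst hA
      refine shape_hook z A hAz ?_ _ _
      intro D hD hDA
      obtain ⟨i, hi⟩ := z.nonempty_of_mem_parts hD
      have hiA : i ∉ A := fun h => hDA (z.eq_of_mem_parts hD hAz hi h)
      rw [← z.part_eq_of_mem hD hi, hz, kerP_part, card_eq_one]
      refine ⟨i, ?_⟩
      ext j
      by_cases hj : j ∈ A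
      · simp [hj, hiA]
        rintro rfl
        exact hiA hj
      · simp [hj, hiA]
    · intro hx
      have hx : shape x = hook n p (Nat.lt_of_lt_of_le Nat.two_pos hp) hpn := hx
      obtain ⟨A, hA, hAp, h1⟩ := of_shape_hook x p _ _ hx
      refine ⟨(hits x).2 ⟨A, hA, hAp.ge⟩, ?_⟩
      intro y hy hyx
      obtain ⟨B, hB, hpB⟩ := (hits y).1 hy
      obtain ⟨D, hD, hBD⟩ := hyx hB
      have hBD' : #B ≤ #D := card_le_card hBD
      have hDA : D = A := by
        by_contra hne
        have := h1 D hD hne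
        omega
      subst hDA
      have hBeq : B = D := eq_of_subset_of_card_le hBD (by omega)
      subst hBeq
      refine le_antisymm hyx ?_
      rw [le_iff_part]
      intro i j hij
      by_cases hE : x.part i = B
      · have hi : i ∈ B := hE ▸ x.mem_part (mem_univ i)
        have hj : j ∈ B := hE ▸ hij ▸ x.mem_part (mem_univ j)
        rw [y.part_eq_of_mem hB hi, y.part_eq_of_mem hB hj]
      · have := h1 _ (part_mem_univ x i) hE
        have := card_le_one.1 this.le i (x.mem_part (mem_univ i)) j
          (hij ▸ x.mem_part (mem_univ j))
        rw [this]

lemma forward (lam : Nat.Partition n) (C : Set (SetPart n)) (hC : IsAnti C)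
    (hb : blocker C = fi {lam}) :
    ∃ (p : ℕ) (hp : 2 ≤ p) (hpn : p ≤ n), lam = hook n p (Nat.lt_of_lt_of_le Nat.two_pos hp) hpn := by
  obtain ⟨⟨c₀, hc₀⟩, hbot, -⟩ := hC
  have hits_top : Hits C (kerP (fun _ : Fin n => ())) := by
    intro c hc
    rw [atom_iff]
    by_contra! H
    apply hbot
    rw [← eq_bot_of_part c ?_]
    · exact hc
    · intro a b hab
      by_contra hne
      exact H a b hne ((kerP_rel _ _ _).2 rfl) hab
  obtain ⟨x, -, hx, hxmin⟩ := exists_min_le (Hits C) _ hits_top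
  have hxlam : shape x = lam := by
    have : x ∈ blocker C := ⟨hx, hxmin⟩
    rw [hb] at this
    exact this
  obtain ⟨a₀, b₀, hne₀, hab₀, -⟩ := (atom_iff _ _).1 (hx c₀ hc₀)
  obtain ⟨A, hA, hAmax⟩ := exists_max_image x.parts Finset.card ⟨_, part_mem_univ x a₀⟩
  have hA2 : 2 ≤ #A := by
    refine le_trans ?_ (hAmax _ (part_mem_univ x a₀))
    apply one_lt_card.2
    exact ⟨a₀, x.mem_part (mem_univ _), b₀, hab₀ ▸ x.mem_part (mem_univ _), hne₀⟩
  have hAn : #A ≤ n := by simpa using card_le_univ A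
  by_cases hall : ∀ B ∈ x.parts, B ≠ A → #B = 1
  · exact ⟨#A, hA2, hAn, by rw [← hxlam]; exact shape_hook x A hA hall _ _⟩
  exfalso
  push Not at hall
  obtain ⟨B, hB, hBA, hB1⟩ := hall
  have hB2 : 2 ≤ #B := by
    have := card_pos.2 (x.nonempty_of_mem_parts hB)
    omega
  have hBle := hAmax B hB
  obtain ⟨b, hbB⟩ := x.nonempty_of_mem_parts hB
  have hbA : b ∉ A := fun h => hBA (x.eq_of_mem_parts hB hA hbB h)
  -- move `b` from `B` to `A`
  set g : Fin n → Finset (Fin n) := fun i => if i = b then A else x.part i with hg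
  have hfib : ∀ k, univ.filter (fun i => g i = k) =
      if k = A then insert b A else if k = B then B.erase b else
        univ.filter (fun i => x.part i = k) := by
    intro k
    split_ifs with h1 h2
    · subst h1
      ext i
      by_cases hi : i = b
      · simp [hg, hi]
      · simp [hg, hi, x.part_eq_iff_mem hA]
    · subst h2
      ext i
      by_cases hi : i = b
      · simp [hg, hi, hBA.symm]
      · simp [hg, hi, x.part_eq_iff_mem hB]
    · ext i
      by_cases hi : i = b
      · subst hi
        simp [hg, x.part_eq_of_mem hB hbB, Ne.symm h1, Ne.symm h2]
      · simp [hg, hi]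
  have himg : univ.image g = x.parts := by
    ext k
    have hk : k ∈ univ.image g ↔ (univ.filter (fun i => g i = k)).Nonempty := by
      simp [Finset.Nonempty]
    rw [hk, hfib]
    split_ifs with h1 h2
    · subst h1; simp [hA]
    · subst h2
      simp only [hB, iff_true]
      rw [← card_pos, card_erase_of_mem hbB]
      omega
    · rw [parts_eq_image]
      simp [Finset.Nonempty]
  have hycard : #(kerP g).parts = #x.parts := by rw [card_kerP, himg]
  -- the new partition still hits everything
  have hy : Hits C (kerP g) := by
    intro c hc
    rw [atom_iff]
    by_contra! H
    have hinj : ∀ i j, g i = g j → c.part i = c.part j → i = j := by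
      intro i j h1 h2
      by_contra hne
      exact H i j hne ((kerP_rel _ _ _).2 h1) h2
    -- find an element of `A ∪ {b}` whose `c`-block misses `B \ {b}`
    obtain ⟨e, heA, heB⟩ : ∃ e ∈ insert b A, c.part e ∉ (B.erase b).image c.part := by
      by_contra! Hc
      have h1 : #((insert b A).image c.part) ≤ #((B.erase b).image c.part) := by
        apply card_le_card
        intro t ht
        obtain ⟨e, he, rfl⟩ := mem_image.1 ht
        exact Hc e he
      rw [card_image_of_injOn] at h1
      · have h2 := card_image_le (s := B.erase b) (f := c.part)
        rw [card_erase_of_mem hbB] at h2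
        rw [card_insert_of_notMem hbA] at h1
        omega
      · intro i hi j hj hij
        have hm : ∀ i ∈ insert b A, g i = A := by
          intro i hi
          have := hfib A
          rw [if_pos rfl] at this
          rw [← this] at hi
          simpa using hi
        exact hinj i j ((hm i hi).trans (hm j hj).symm) hij
    have hge : g e = A := by
      have := hfib A
      rw [if_pos rfl] at this
      rw [← this] at heA
      simpa using heA
    have heB' : e ∉ B.erase b := fun h => heB (mem_image_of_mem _ h)
    set h : Fin n → Finset (Fin n) := fun i => if i = e then B else g i with hh
    have hfibh : ∀ k, univ.filter (fun i => h i = k) =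
        if k = A then (insert b A).erase e else if k = B then insert e (B.erase b) else
          univ.filter (fun i => x.part i = k) := by
      intro k
      have hk := hfib k
      split_ifs at hk ⊢ with h1 h2
      · subst h1
        rw [← hk]
        ext i
        by_cases hi : i = e
        · simp [hh, hi, hBA]
        · simp [hh, hi]
      · subst h2
        rw [← hk]
        ext i
        by_cases hi : i = e
        · simp [hh, hi]
        · simp [hh, hi]
      · rw [← hk]
        ext i
        by_cases hi : i = e
        · simp [hh, hi, hge, Ne.symm h1, Ne.symm h2]
        · simp [hh, hi]
    have hcardA : #((insert b A).erase e) = #A := by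
      rw [card_erase_of_mem heA, card_insert_of_notMem hbA]; omega
    have hcardB : #(insert e (B.erase b)) = #B := by
      rw [card_insert_of_notMem heB', card_erase_of_mem hbB]; omega
    have hpart : ∀ k ∈ x.parts, univ.filter (fun i => x.part i = k) = k := by
      intro k hk
      ext i
      simp [x.part_eq_iff_mem hk]
    have hcard : ∀ k ∈ x.parts, #(univ.filter (fun i => h i = k)) = #k := by
      intro k hk
      rw [hfibh]
      split_ifs with h1 h2
      · rw [hcardA, h1]
      · rw [hcardB, h2]
      · rw [hpart k hk]
    have himgh : univ.image h = x.parts := by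
      ext k
      have hk : k ∈ univ.image h ↔ (univ.filter (fun i => h i = k)).Nonempty := by
        simp [Finset.Nonempty]
      rw [hk]
      constructor
      · rw [hfibh]
        split_ifs with h1 h2
        · intro _; rwa [h1]
        · intro _; rwa [h2]
        · rintro ⟨i, hi⟩
          simp only [mem_filter, mem_univ, true_and] at hi
          rw [← hi]
          exact part_mem_univ x i
      · intro hk
        rw [← card_pos, hcard k hk]
        exact card_pos.2 (x.nonempty_of_mem_parts hk)
    have hshape : shape (kerP h) = lam := by
      rw [← hxlam]
      apply Nat.Partition.ext
      rw [shape_kerP, himgh]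
      exact Multiset.map_congr rfl (fun k hk => hcard k hk)
    have hmem : kerP h ∈ blocker C := by
      rw [hb]
      exact hshape
    obtain ⟨i, j, hne, h1, h2⟩ := (atom_iff _ _).1 (hmem.1 c hc)
    rw [kerP_rel] at h1
    have hBmem : ∀ i, g i = B → i ∈ B.erase b := by
      intro i hi
      have := hfib B
      rw [if_neg hBA, if_pos rfl] at this
      rw [← this]
      simpa using hi
    by_cases hi : i = e
    · have hj : j ≠ e := fun h => hne (hi.trans h.symm)
      simp only [hh, if_pos hi, if_neg hj] at h1
      apply heB
      rw [← hi, h2]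
      exact mem_image_of_mem _ (hBmem j h1.symm)
    · by_cases hj : j = e
      · simp only [hh, if_neg hi, if_pos hj] at h1
        apply heB
        rw [← hj, ← h2]
        exact mem_image_of_mem _ (hBmem i h1)
      · simp only [hh, if_neg hi, if_neg hj] at h1
        exact hne (hinj i j h1 h2)
  obtain ⟨z, hzy, hz, hzmin⟩ := exists_min_le (Hits C) _ hy
  have hzlam : shape z = lam := by
    have : z ∈ blocker C := ⟨hz, hzmin⟩
    rw [hb] at this
    exact this
  have hzeq : z = kerP g := by
    apply eq_of_le_of_card hzy
    rw [hycard]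
    exact card_parts_of_shape (hzlam.trans hxlam.symm)
  have hmem : #(insert b A) ∈ (shape x).parts := by
    rw [hxlam, ← hzlam, hzeq, shape_kerP, himg]
    rw [Multiset.mem_map]
    exact ⟨A, hA, by rw [hfib, if_pos rfl]⟩
  have hmem' : #(insert b A) ∈ x.parts.val.map Finset.card := hmem
  rw [Multiset.mem_map] at hmem'
  obtain ⟨D, hD, hDc⟩ := hmem'
  have := hAmax D hD
  rw [card_insert_of_notMem hbA] at hDc
  omega

end helpers

/-- Corollary 3.3 (second part): for a partition `λ` of `n`, the antichain `fi(λ)`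
of all set partitions of shape `λ` is itself a blocker in `Π_n` (i.e. equals `C*`
for some antichain `C`) if and only if `λ` is a hook shape `(p, 1^{n-p})`. -/
theorem fi_isBlocker_iff_hook (n : ℕ) (lam : Nat.Partition n) :
    (∃ C : Set (SetPart n), IsAnti C ∧ blocker C = fi {lam}) ↔
      ∃ (p : ℕ) (hp : 2 ≤ p) (hpn : p ≤ n), lam = hook n p (by omega) hpn := by
  constructor
  · rintro ⟨C, hC, hb⟩
    exact forward lam C hC hb
  · rintro ⟨p, hp, hpn, rfl⟩
    exact backward p hp hpn
end

section
/- The map A ↦ fi(A)* determines a bijection between the set of antichains in the dominance order Dom(n) on partitions of n and the set of S_n-invariant blockers in the partition lattice Π_n (i.e. the S_n-invariant antichains of Π_n of the form C* for some antichain C). -/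
open Finset

/-- The dominance order `Dom(n)` on partitions of `n`: `μ ≤ ν` iff for every `k`
the sum of the `k` largest parts of `μ` is at most that of `ν`. -/
def DomLE {n : ℕ} (μ ν : Nat.Partition n) : Prop :=
  ∀ k, topSum μ k ≤ topSum ν k

/-- The partition of `n` into `n` parts equal to `1`; this is the bottom element of
both the refinement order and the dominance order on partitions of `n`. -/
def onesPart (n : ℕ) : Nat.Partition n where
  parts := Multiset.replicate n 1
  parts_pos := by
    intro i hi
    rw [Multiset.eq_of_mem_replicate hi]
    exact one_pos
  parts_sum := by simp

/-- The action of a permutation of `{1,…,n}` on set partitions of `{1,…,n}`. -/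
def permAct {n : ℕ} (g : Equiv.Perm (Fin n)) (σ : SetPart n) : SetPart n :=
  (σ.map (g.finsetCongr.toOrderIso
      (fun s t h => by
        simp only [Equiv.finsetCongr_apply]
        exact Finset.map_subset_map.2 h)
      (fun s t h => by
        simp only [Equiv.finsetCongr_symm, Equiv.finsetCongr_apply]
        exact Finset.map_subset_map.2 h))).copy
    (Finset.map_univ_equiv g)

/-- A set of set partitions is `S_n`-invariant if it is closed under the action of
the symmetric group `S_n` on `Π_n`. -/
def SnInvariant {n : ℕ} (A : Set (SetPart n)) : Prop :=
  ∀ g : Equiv.Perm (Fin n), ∀ σ ∈ A, permAct g σ ∈ A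


/-- Two points lie in a common block. -/
def SRel {n : ℕ} (σ : SetPart n) (i j : Fin n) : Prop := ∃ p ∈ σ.parts, i ∈ p ∧ j ∈ p

theorem rel_refl {n : ℕ} (σ : SetPart n) (i : Fin n) : SRel σ i i := by
  obtain ⟨p, hp, hi⟩ := σ.exists_mem (mem_univ i)
  exact ⟨p, hp, hi, hi⟩

theorem rel_symm {n : ℕ} {σ : SetPart n} {i j : Fin n} (h : SRel σ i j) : SRel σ j i := by
  obtain ⟨p, hp, hi, hj⟩ := h
  exact ⟨p, hp, hj, hi⟩

theorem rel_trans {n : ℕ} {σ : SetPart n} {i j k : Fin n} (h : SRel σ i j) (h' : SRel σ j k) :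
    SRel σ i k := by
  obtain ⟨p, hp, hi, hj⟩ := h
  obtain ⟨q, hq, hj', hk⟩ := h'
  obtain rfl := σ.eq_of_mem_parts hp hq hj hj'
  exact ⟨p, hp, hi, hk⟩

theorem le_iff_rel {n : ℕ} (σ τ : SetPart n) : σ ≤ τ ↔ ∀ i j, SRel σ i j → SRel τ i j := by
  constructor
  · rintro h i j ⟨p, hp, hi, hj⟩
    obtain ⟨q, hq, hpq⟩ := h hp
    exact ⟨q, hq, hpq hi, hpq hj⟩
  · intro h p hp
    obtain ⟨i, hi⟩ := σ.nonempty_of_mem_parts hp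
    obtain ⟨q, hq, hiq⟩ := τ.exists_mem (mem_univ i)
    refine ⟨q, hq, fun j hj => ?_⟩
    obtain ⟨q', hq', hi', hj'⟩ := h i j ⟨p, hp, hi, hj⟩
    obtain rfl := τ.eq_of_mem_parts hq hq' hiq hi'
    exact hj'

theorem eq_of_rel {n : ℕ} {σ τ : SetPart n} (h : ∀ i j, SRel σ i j ↔ SRel τ i j) : σ = τ :=
  le_antisymm ((le_iff_rel _ _).2 fun i j => (h i j).1) ((le_iff_rel _ _).2 fun i j => (h i j).2)

theorem rel_bot {n : ℕ} {i j : Fin n} (h : SRel (⊥ : SetPart n) i j) : i = j := by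
  obtain ⟨p, hp, hi, hj⟩ := h
  rw [Finpartition.mem_bot_iff] at hp
  obtain ⟨a, _, rfl⟩ := hp
  rw [mem_singleton] at hi hj
  rw [hi, hj]

/-- Trivial meet. -/
def Dis {n : ℕ} (y x : SetPart n) : Prop := ∀ i j, SRel y i j → SRel x i j → i = j

theorem share_iff {n : ℕ} (x a : SetPart n) :
    (∃ l : SetPart n, IsAtom l ∧ l ≤ x ∧ l ≤ a) ↔ ¬ Dis a x := by
  constructor
  · rintro ⟨l, hl, hx, ha⟩ hd
    apply hl.1
    rw [← le_bot_iff, le_iff_rel]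
    intro i j hij
    obtain rfl := hd i j ((le_iff_rel _ _).1 ha _ _ hij) ((le_iff_rel _ _).1 hx _ _ hij)
    exact rel_refl _ _
  · intro hd
    have hne : x ⊓ a ≠ ⊥ := by
      intro h
      apply hd
      rintro i j ⟨p, hp, hpi, hpj⟩ ⟨q, hq, hqi, hqj⟩
      apply rel_bot
      rw [← h]
      refine ⟨q ⊓ p, ?_, ?_, ?_⟩
      · rw [Finpartition.parts_inf, mem_erase]
        refine ⟨?_, ?_⟩
        · apply Finset.Nonempty.ne_empty
          exact ⟨i, by simp [hpi, hqi]⟩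
        · exact mem_image.2 ⟨(q, p), by simp [hp, hq], rfl⟩
      · simp [hpi, hqi]
      · simp [hpj, hqj]
    obtain ⟨l, hl, hle⟩ := (IsAtomic.eq_bot_or_exists_atom_le (x ⊓ a)).resolve_left hne
    exact ⟨l, hl, hle.trans inf_le_left, hle.trans inf_le_right⟩

/-- The upper set of blocking elements. -/
def Up {n : ℕ} (A : Set (SetPart n)) : Set (SetPart n) := {x | ∀ a ∈ A, ¬ Dis a x}

theorem mem_blocker {n : ℕ} (A : Set (SetPart n)) (x : SetPart n) :
    x ∈ blocker A ↔ x ∈ Up A ∧ ∀ y ∈ Up A, y ≤ x → y = x := by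
  simp only [blocker, share_iff, Up, Set.mem_ofPred_eq]

theorem dis_mono {n : ℕ} {a x y : SetPart n} (h : x ≤ y) (hd : Dis a y) : Dis a x :=
  fun i j h1 h2 => hd i j h1 ((le_iff_rel _ _).1 h _ _ h2)

theorem dis_symm {n : ℕ} {a x : SetPart n} (hd : Dis a x) : Dis x a :=
  fun i j h1 h2 => hd i j h2 h1

theorem mem_up_iff {n : ℕ} (A : Set (SetPart n)) (x : SetPart n) :
    x ∈ Up A ↔ ∃ b ∈ blocker A, b ≤ x := by
  constructor
  · intro h
    obtain ⟨b, hb, hm⟩ := Set.Finite.exists_le_minimal (Set.toFinite (Up A)) h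
    refine ⟨b, (mem_blocker _ _).2 ⟨hm.1, fun y hy hyb => ?_⟩, hb⟩
    exact le_antisymm hyb (hm.2 hy hyb)
  · rintro ⟨b, hb, hle⟩ a ha hd
    exact ((mem_blocker _ _).1 hb).1 a ha (dis_mono hle hd)

theorem blocker_congr {n : ℕ} {A A' : Set (SetPart n)} (h : Up A = Up A') :
    blocker A = blocker A' := by
  ext x; rw [mem_blocker, mem_blocker, h]

theorem up_congr {n : ℕ} {A A' : Set (SetPart n)} (h : blocker A = blocker A') :
    Up A = Up A' := by
  ext x; rw [mem_up_iff, mem_up_iff, h]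

theorem parts_permAct {n : ℕ} (g : Equiv.Perm (Fin n)) (σ : SetPart n) :
    (permAct g σ).parts = σ.parts.map (Finset.mapEmbedding g.toEmbedding).toEmbedding := by
  ext p
  change p ∈ σ.parts.map _ ↔ _
  rw [mem_map, mem_map]
  rfl

theorem rel_permAct {n : ℕ} (g : Equiv.Perm (Fin n)) (σ : SetPart n) (i j : Fin n) :
    SRel (permAct g σ) (g i) (g j) ↔ SRel σ i j := by
  simp [SRel, parts_permAct]

theorem rel_permAct' {n : ℕ} (g : Equiv.Perm (Fin n)) (σ : SetPart n) (i j : Fin n) :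
    SRel (permAct g σ) i j ↔ SRel σ (g.symm i) (g.symm j) := by
  rw [← rel_permAct g σ (g.symm i), Equiv.apply_symm_apply, Equiv.apply_symm_apply]

theorem shape_permAct {n : ℕ} (g : Equiv.Perm (Fin n)) (σ : SetPart n) :
    shape (permAct g σ) = shape σ := by
  apply Nat.Partition.ext
  change (permAct g σ).parts.val.map Finset.card = σ.parts.val.map Finset.card
  rw [parts_permAct, Finset.map_val, Multiset.map_map]
  apply Multiset.map_congr rfl
  intro p _
  simp

/-- The parts in decreasing order, extended by zero. -/
def bf {n : ℕ} (μ : Nat.Partition n) (i : ℕ) : ℕ := ((μ.parts.sort (· ≤ ·)).reverse).getD i 0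

theorem take_sum_getD (l : List ℕ) (k : ℕ) : (l.take k).sum = ∑ i ∈ range k, l.getD i 0 := by
  induction l generalizing k with
  | nil => simp
  | cons a l ih =>
    cases k with
    | zero => simp
    | succ k => simp [Finset.sum_range_succ', ih, add_comm]

theorem topSum_eq {n : ℕ} (μ : Nat.Partition n) (k : ℕ) : topSum μ k = ∑ i ∈ range k, bf μ i :=
  take_sum_getD _ _

theorem sorted_rev {n : ℕ} (μ : Nat.Partition n) :
    ((μ.parts.sort (· ≤ ·)).reverse).Pairwise (· ≥ ·) := by
  rw [List.pairwise_reverse]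
  exact Multiset.pairwise_sort _ _

theorem bf_antitone {n : ℕ} (μ : Nat.Partition n) : Antitone (bf μ) := by
  intro i j hij
  unfold bf
  have h := sorted_rev μ
  generalize ((μ.parts.sort (· ≤ ·)).reverse) = l at h
  rcases hij.eq_or_lt with rfl | hlt
  · exact le_rfl
  by_cases hj : j < l.length
  · rw [List.getD_eq_getElem _ _ hj, List.getD_eq_getElem _ _ (hlt.trans hj)]
    exact List.pairwise_iff_getElem.1 h i j _ _ hlt
  · rw [List.getD_eq_default _ _ (not_lt.1 hj)]; exact Nat.zero_le _

theorem rev_coe {n : ℕ} (μ : Nat.Partition n) :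
    (((μ.parts.sort (· ≤ ·)).reverse : List ℕ) : Multiset ℕ) = μ.parts := by
  rw [Multiset.coe_reverse, Multiset.sort_eq]

/-- number of parts -/
def len {n : ℕ} (μ : Nat.Partition n) : ℕ := ((μ.parts.sort (· ≤ ·)).reverse).length

theorem bf_pos_iff {n : ℕ} (μ : Nat.Partition n) (i : ℕ) : 0 < bf μ i ↔ i < len μ := by
  unfold bf len
  constructor
  · intro h
    by_contra hc
    rw [List.getD_eq_default _ _ (not_lt.1 hc)] at h
    exact lt_irrefl _ h
  · intro h
    rw [List.getD_eq_getElem _ _ h]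
    apply μ.parts_pos
    have h2 : ∀ v, v ∈ (μ.parts.sort (· ≤ ·)).reverse → v ∈ μ.parts := by
      intro v hv
      rw [← rev_coe μ, Multiset.mem_coe]; exact hv
    exact h2 _ (List.getElem_mem _)

theorem sum_bf {n : ℕ} (μ : Nat.Partition n) : ∑ i ∈ range (len μ), bf μ i = n := by
  rw [← topSum_eq, topSum, len, List.take_length, ← Multiset.sum_coe, rev_coe, μ.parts_sum]

theorem map_bf {n : ℕ} (μ : Nat.Partition n) : (Multiset.range (len μ)).map (bf μ) = μ.parts := by
  rw [← Multiset.coe_range, Multiset.map_coe]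
  conv_rhs => rw [← rev_coe μ]
  congr 1
  unfold bf len
  generalize ((μ.parts.sort (· ≤ ·)).reverse) = l
  apply List.ext_getElem
  · simp
  · intro i h1 h2
    simp [h2]

theorem of_col {n : ℕ} (μ : Nat.Partition n) (f : Fin n → ℕ)
    (hf : ∀ c, #{x | f x = c} = bf μ c) :
    ∃ y : SetPart n, (∀ i j, SRel y i j ↔ f i = f j) ∧ shape y = μ := by
  let fib : ℕ → Finset (Fin n) := fun c => {x | f x = c}
  have hlt : ∀ x, f x < len μ := by
    intro x
    rw [← bf_pos_iff, ← hf, card_pos]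
    exact ⟨x, by simp⟩
  have hne : ∀ c ∈ range (len μ), (fib c).Nonempty := by
    intro c hc
    rw [← card_pos, hf, bf_pos_iff]; exact mem_range.1 hc
  let y : SetPart n := Finpartition.ofExistsUnique ((range (len μ)).image fib)
    (fun p _ => subset_univ p)
    (by
      intro a _
      refine ⟨fib (f a), ⟨mem_image.2 ⟨f a, mem_range.2 (hlt a), rfl⟩, by simp [fib]⟩, ?_⟩
      rintro p ⟨hp, ha⟩
      obtain ⟨c, hc, rfl⟩ := mem_image.1 hp
      have : f a = c := by simpa [fib] using ha
      rw [this])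
    (by
      intro h
      obtain ⟨c, hc, h⟩ := mem_image.1 h
      exact (hne c hc).ne_empty h)
  have hy : y.parts = (range (len μ)).image fib := rfl
  refine ⟨y, ?_, ?_⟩
  · intro i j
    constructor
    · rintro ⟨p, hp, hi, hj⟩
      rw [hy] at hp
      obtain ⟨c, hc, rfl⟩ := mem_image.1 hp
      simp only [fib, mem_filter, mem_univ, true_and] at hi hj
      rw [hi, hj]
    · intro h
      refine ⟨fib (f i), ?_, by simp [fib], by simp [fib, h]⟩
      rw [hy]; exact mem_image.2 ⟨f i, mem_range.2 (hlt i), rfl⟩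
  · apply Nat.Partition.ext
    change y.parts.val.map Finset.card = _
    rw [hy, Finset.image_val_of_injOn, Multiset.map_map, ← map_bf μ]
    · apply Multiset.map_congr rfl
      intro c _
      exact hf c
    · intro c hc d hd h
      obtain ⟨x, hx⟩ := hne c hc
      have hx' : x ∈ fib d := by rw [← show fib c = fib d from h]; exact hx
      simp only [fib, mem_filter, mem_univ, true_and] at hx hx'
      rw [← hx, hx']

theorem exists_count {n : ℕ} (μ : Nat.Partition n) :
    ∃ f : Fin n → ℕ, ∀ c, #{x | f x = c} = bf μ c := by
  let s : Finset (Σ _ : ℕ, ℕ) := (range (len μ)).sigma (fun i => range (bf μ i))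
  have hs : #s = n := by
    rw [card_sigma]; simp only [card_range]; exact sum_bf μ
  let e := Finset.equivFinOfCardEq hs
  refine ⟨fun x => (e.symm x).1.1, fun c => ?_⟩
  rw [← card_range (bf μ c)]
  symm
  have hm : ∀ j ∈ range (bf μ c), (⟨c, j⟩ : Σ _ : ℕ, ℕ) ∈ s := by
    intro j hj
    rw [mem_range] at hj
    simp only [s, mem_sigma, mem_range]
    exact ⟨(bf_pos_iff _ _).1 (Nat.zero_lt_of_lt hj), hj⟩
  refine Finset.card_bij (fun j hj => e ⟨⟨c, j⟩, hm j hj⟩) ?_ ?_ ?_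
  · intro j hj; simp
  · intro j hj k hk h
    have := e.injective h
    simpa using this
  · intro x hx
    have hx' : (e.symm x).1.1 = c := by simpa using hx
    have h2 := (e.symm x).2
    simp only [s, mem_sigma, mem_range] at h2
    refine ⟨(e.symm x).1.2, ?_, ?_⟩
    · rw [mem_range, ← hx']; exact h2.2
    · rw [← Equiv.eq_symm_apply]
      apply Subtype.ext
      subst hx'
      rfl

theorem exists_col {n : ℕ} (y : SetPart n) :
    ∃ f : Fin n → ℕ, (∀ i j, SRel y i j ↔ f i = f j) ∧ ∀ c, #{x | f x = c} = bf (shape y) c := by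
  classical
  let l : List (Finset (Fin n)) := y.parts.toList.mergeSort (fun a b => decide (#b ≤ #a))
  have hperm : l.Perm y.parts.toList := List.mergeSort_perm _ _
  have hmem : ∀ p, p ∈ l ↔ p ∈ y.parts := fun p => by rw [hperm.mem_iff, mem_toList]
  have hnd : l.Nodup := hperm.nodup_iff.2 (nodup_toList _)
  have hsort : (l.map Finset.card).Pairwise (· ≥ ·) := by
    rw [List.pairwise_map]
    have := List.pairwise_mergeSort (le := fun a b : Finset (Fin n) => decide (#b ≤ #a))
      (by intro a b c; simp only [decide_eq_true_eq]; omega)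
      (by intro a b; simp only [Bool.or_eq_true, decide_eq_true_eq]; omega) y.parts.toList
    exact this.imp (by intro a b h; simpa using h)
  have hl : l.map Finset.card = ((shape y).parts.sort (· ≤ ·)).reverse := by
    refine List.Perm.eq_of_pairwise (le := (· ≥ ·)) ?_ hsort (sorted_rev _) ?_
    · intro a b _ _ h1 h2; omega
    · rw [← Multiset.coe_eq_coe, rev_coe]
      change _ = y.parts.val.map Finset.card
      rw [← Multiset.map_coe, Multiset.coe_eq_coe.2 hperm, Finset.coe_toList]
  have hidx : ∀ x : Fin n, ∃ c, ∃ h : c < l.length, x ∈ l[c] := by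
    intro x
    obtain ⟨p, hp, hx⟩ := y.exists_mem (mem_univ x)
    obtain ⟨c, hc, rfl⟩ := List.getElem_of_mem ((hmem p).2 hp)
    exact ⟨c, hc, hx⟩
  choose f hf hxf using hidx
  have huniq : ∀ x c (h : c < l.length), x ∈ l[c] → f x = c := by
    intro x c h hx
    have := y.eq_of_mem_parts ((hmem _).1 (List.getElem_mem h))
      ((hmem _).1 (List.getElem_mem (hf x))) hx (hxf x)
    exact ((List.Nodup.getElem_inj_iff hnd).1 this).symm
  refine ⟨f, ?_, ?_⟩
  · intro i j
    constructor
    · rintro ⟨p, hp, hi, hj⟩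
      obtain ⟨c, hc, rfl⟩ := List.getElem_of_mem ((hmem p).2 hp)
      rw [huniq i c hc hi, huniq j c hc hj]
    · intro h
      refine ⟨l[f i]'(hf i), (hmem _).1 (List.getElem_mem _), hxf i, ?_⟩
      have := hxf j
      simpa only [h] using this
  · intro c
    unfold bf
    rw [← hl]
    by_cases hc : c < l.length
    · rw [List.getD_eq_getElem _ _ (by simpa using hc), List.getElem_map]
      congr 1
      ext x
      simp only [mem_filter, mem_univ, true_and]
      constructor
      · rintro rfl; exact hxf x
      · exact huniq x c hc
    · rw [List.getD_eq_default _ _ (by simpa using hc), card_eq_zero]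
      apply filter_eq_empty_iff.2
      rintro x _ rfl
      exact hc (hf x)

theorem card_lt_eq {n : ℕ} (f : Fin n → ℕ) (k : ℕ) :
    #{x | f x < k} = ∑ c ∈ range k, #{x | f x = c} := by
  rw [Finset.card_eq_sum_card_fiberwise (f := f) (t := range k)]
  · apply sum_congr rfl
    intro c hc
    congr 1
    ext x
    simp only [mem_filter, mem_univ, true_and, mem_range] at hc ⊢
    constructor
    · exact fun h => h.2
    · rintro rfl; exact ⟨hc, rfl⟩
  · intro x hx; simpa using hx

theorem topSum_col {n : ℕ} {μ : Nat.Partition n} {f : Fin n → ℕ}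
    (hf : ∀ c, #{x | f x = c} = bf μ c) (k : ℕ) : topSum μ k = #{x | f x < k} := by
  rw [topSum_eq, card_lt_eq]
  exact sum_congr rfl fun c _ => (hf c).symm

theorem domLE_antisymm {n : ℕ} {μ ν : Nat.Partition n} (h : DomLE μ ν) (h' : DomLE ν μ) :
    μ = ν := by
  have ht : ∀ k, topSum μ k = topSum ν k := fun k => le_antisymm (h k) (h' k)
  have hb : ∀ k, bf μ k = bf ν k := by
    intro k
    have h1 := ht (k+1)
    have h0 := ht k
    simp only [topSum_eq, sum_range_succ] at h1 h0
    omega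
  obtain ⟨f, hf⟩ := exists_count μ
  obtain ⟨y, hy, rfl⟩ := of_col μ f hf
  obtain ⟨z, hz, rfl⟩ := of_col ν f (fun c => by rw [hf, hb])
  rw [eq_of_rel fun i j => (hy i j).trans (hz i j).symm]

theorem exists_shape {n : ℕ} (μ : Nat.Partition n) : ∃ y : SetPart n, shape y = μ := by
  obtain ⟨f, hf⟩ := exists_count μ
  obtain ⟨y, _, h⟩ := of_col μ f hf
  exact ⟨y, h⟩

theorem exists_perm {n : ℕ} {σ τ : SetPart n} (h : shape σ = shape τ) :
    ∃ g, permAct g σ = τ := by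
  obtain ⟨f, hf, hc⟩ := exists_col σ
  obtain ⟨f', hf', hc'⟩ := exists_col τ
  have he : ∀ c, Nonempty ({x // f x = c} ≃ {x // f' x = c}) := by
    intro c
    rw [← Fintype.card_eq, Fintype.card_subtype, Fintype.card_subtype, hc, hc', h]
  let e := fun c => (he c).some
  let g : Fin n ≃ Fin n := (Equiv.sigmaFiberEquiv f).symm.trans
    ((Equiv.sigmaCongrRight e).trans (Equiv.sigmaFiberEquiv f'))
  have hg : ∀ x, f' (g x) = f x := fun x => (e (f x) ⟨x, rfl⟩).2
  refine ⟨g, eq_of_rel fun i j => ?_⟩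
  rw [rel_permAct', hf, hf', ← hg, ← hg]
  simp

theorem shift_step {n : ℕ} (x : SetPart n) (b : ℕ → ℕ) (hb : Antitone b) (N : ℕ)
    (hN : ∑ c ∈ range N, b c = n) (m : ℕ) : ∀ f : Fin n → ℕ,
    (∀ i j, f i = f j → SRel x i j → i = j) →
    (∀ k, ∑ c ∈ range k, b c ≤ #{x | f x < k}) →
    (∑ x, (N - f x) = m) →
    ∃ f' : Fin n → ℕ, (∀ i j, f' i = f' j → SRel x i j → i = j) ∧ ∀ c, #{x | f' x = c} = b c := by
  induction m using Nat.strong_induction_on with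
  | _ m ih =>
  intro f hP hdom hm
  by_cases hall : ∀ c, #{x | f x = c} = b c
  · exact ⟨f, hP, hall⟩
  push Not at hall
  classical
  obtain ⟨i, hi, himin⟩ : ∃ i, #{x | f x = i} ≠ b i ∧ ∀ c < i, #{x | f x = c} = b c :=
    ⟨Nat.find hall, Nat.find_spec hall, fun c hc => not_not.1 (Nat.find_min hall hc)⟩
  have hgt : b i < #{x | f x = i} := by
    have h1 := hdom (i+1)
    have h2 : ∑ c ∈ range i, #{x | f x = c} = ∑ c ∈ range i, b c :=
      sum_congr rfl (fun c hc => himin c (mem_range.1 hc))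
    rw [card_lt_eq, sum_range_succ, sum_range_succ, h2] at h1
    omega
  have hex : ∃ j, #{x | f x = j} < b j := by
    by_contra hc
    push Not at hc
    have h1 : ∑ c ∈ range (max N (i+1)), b c < ∑ c ∈ range (max N (i+1)), #{x | f x = c} :=
      sum_lt_sum (fun c _ => hc c) ⟨i, by simp, hgt⟩
    rw [← card_lt_eq] at h1
    have h2 : ∑ c ∈ range N, b c ≤ ∑ c ∈ range (max N (i+1)), b c :=
      sum_le_sum_of_subset (range_subset_range.2 (le_max_left _ _))
    have h3 := card_le_univ (univ.filter fun x => f x < max N (i+1))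
    rw [Fintype.card_fin] at h3
    omega
  obtain ⟨j, hj, hjmin⟩ : ∃ j, #{x | f x = j} < b j ∧ ∀ c < j, b c ≤ #{x | f x = c} :=
    ⟨Nat.find hex, Nat.find_spec hex, fun c hc => not_lt.1 (Nat.find_min hex hc)⟩
  have hij : i < j := by
    rcases lt_trichotomy i j with h | h | h
    · exact h
    · subst h; omega
    · have := himin j h; omega
  have hbij := hb hij.le
  obtain ⟨u, hu, hun⟩ : ∃ u, f u = i ∧ ∀ v, SRel x u v → f v ≠ j := by
    by_contra hc
    push Not at hc
    have : ∀ u : Fin n, ∃ v, f u = i → SRel x u v ∧ f v = j := by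
      intro u
      by_cases h : f u = i
      · obtain ⟨v, hv⟩ := hc u h
        exact ⟨v, fun _ => hv⟩
      · exact ⟨u, fun h' => absurd h' h⟩
    choose v hv using this
    have : #{x | f x = i} ≤ #{x | f x = j} := by
      apply card_le_card_of_injOn v
      · intro a ha
        have ha' : f a = i := by simpa using ha
        simpa using (hv a ha').2
      · intro a ha c hc h
        have ha' : f a = i := by simpa using ha
        have hc' : f c = i := by simpa using hc
        apply hP a c (ha'.trans hc'.symm)
        have h1 := (hv a ha').1
        rw [h] at h1
        exact rel_trans h1 (rel_symm (hv c hc').1)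
    omega
  have huN : f u < N := by
    have h1 := hdom N
    rw [hN] at h1
    have h2 : (univ.filter fun x => f x < N) = univ := by
      apply eq_univ_of_card
      apply le_antisymm (card_le_univ _)
      rw [Fintype.card_fin]; exact h1
    have : u ∈ (univ.filter fun x => f x < N) := by rw [h2]; exact mem_univ _
    simpa using this
  let f' := Function.update f u j
  have hfu : f' u = j := by simp [f']
  have hfo : ∀ w, w ≠ u → f' w = f w := fun w hw => by simp [f', hw]
  refine ih (∑ x, (N - f' x)) ?_ f' ?_ ?_ rfl
  · rw [← hm]
    apply sum_lt_sum
    · intro w _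
      by_cases hw : w = u
      · subst hw; omega
      · rw [hfo w hw]
    · exact ⟨u, mem_univ _, by omega⟩
  · intro s t hst hr
    by_cases hs : s = u
    · by_cases ht : t = u
      · rw [hs, ht]
      · subst hs
        rw [hfu, hfo t ht] at hst
        exact absurd hst.symm (hun t hr)
    · by_cases ht : t = u
      · subst ht
        rw [hfu, hfo s hs] at hst
        exact absurd hst (hun s (rel_symm hr))
      · rw [hfo s hs, hfo t ht] at hst
        exact hP s t hst hr
  · intro k
    by_cases hk : i < k ∧ k ≤ j
    · have h1 : ∑ c ∈ range k, b c < #{x | f x < k} := by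
        rw [card_lt_eq]
        exact sum_lt_sum (fun c hc => hjmin c (by rw [mem_range] at hc; omega))
          ⟨i, mem_range.2 hk.1, hgt⟩
      have h2 : (univ.filter fun x => f x < k).erase u ⊆ univ.filter fun x => f' x < k := by
        intro w hw
        rw [mem_erase] at hw
        simp only [mem_filter, mem_univ, true_and] at hw ⊢
        rw [hfo w hw.1]; exact hw.2
      have h3 := card_le_card h2
      have h4 := pred_card_le_card_erase (s := univ.filter fun x => f x < k) (a := u)
      omega
    · refine (hdom k).trans (card_le_card ?_)
      intro w hw
      simp only [mem_filter, mem_univ, true_and] at hw ⊢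
      by_cases hwu : w = u
      · subst hwu; omega
      · rw [hfo w hwu]; exact hw

theorem dis_down {n : ℕ} {y x : SetPart n} (hd : Dis y x) {μ : Nat.Partition n}
    (h : DomLE μ (shape y)) : ∃ y', shape y' = μ ∧ Dis y' x := by
  obtain ⟨f, hf, hc⟩ := exists_col y
  obtain ⟨f', hP, hc'⟩ := shift_step x (bf μ) (bf_antitone μ) (len μ) (sum_bf μ) _ f
    (fun i j h hr => hd i j ((hf i j).2 h) hr)
    (fun k => by rw [← topSum_eq, ← topSum_col hc]; exact h k) rfl
  obtain ⟨y', hy', hs⟩ := of_col μ f' hc'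
  exact ⟨y', hs, fun i j h hr => hP i j ((hy' i j).1 h) hr⟩

theorem exists_ker {n : ℕ} (g : Fin n → ℕ) : ∃ x : SetPart n, ∀ i j, SRel x i j ↔ g i = g j := by
  classical
  refine ⟨Finpartition.ofSetoid (Setoid.ker g), fun i j => ?_⟩
  have h : ∀ a b, b ∈ (Finpartition.ofSetoid (Setoid.ker g)).part a ↔ g a = g b := by
    intro a b
    rw [Finpartition.mem_part_ofSetoid_iff_rel]; rfl
  constructor
  · rintro ⟨p, hp, hi, hj⟩
    rw [← h, Finpartition.part_eq_of_mem _ hp hi]; exact hj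
  · intro hg
    exact ⟨_, Finpartition.part_mem _ |>.2 (mem_univ i), (h i i).2 rfl, (h i j).2 hg⟩

theorem exists_dual {n : ℕ} (y : SetPart n) :
    ∃ x : SetPart n, Dis y x ∧ ∀ y', Dis y' x → DomLE (shape y') (shape y) := by
  classical
  obtain ⟨f, hf, hc⟩ := exists_col y
  have he : ∀ c, Nonempty ({x // f x = c} ≃ Fin (bf (shape y) c)) := by
    intro c
    rw [← Fintype.card_eq, Fintype.card_subtype, hc, Fintype.card_fin]
  let e := fun c => (he c).some
  let g : Fin n → ℕ := fun x => e (f x) ⟨x, rfl⟩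
  have hg : ∀ c (z : {x // f x = c}), g z.1 = e c z := by
    rintro c ⟨z, rfl⟩; rfl
  have hcol : ∀ z c, c ≤ f z → ∃ w, f w = c ∧ g w = g z := by
    intro z c hcz
    have h1 : g z < bf (shape y) c := lt_of_lt_of_le (e (f z) ⟨z, rfl⟩).2 (bf_antitone _ hcz)
    refine ⟨((e c).symm ⟨g z, h1⟩).1, ((e c).symm ⟨g z, h1⟩).2, ?_⟩
    rw [hg]; simp
  obtain ⟨x, hx⟩ := exists_ker g
  refine ⟨x, ?_, ?_⟩
  · intro i j hy hr
    rw [hf] at hy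
    rw [hx] at hr
    have h1 := hg (f j) ⟨i, hy⟩
    have h2 := hg (f j) ⟨j, rfl⟩
    have h3 : e (f j) ⟨i, hy⟩ = e (f j) ⟨j, rfl⟩ := Fin.ext (by rw [← h1, ← h2]; exact hr)
    simpa using (e (f j)).injective h3
  · intro y' hd k
    obtain ⟨f', hf', hc'⟩ := exists_col y'
    rw [topSum_col hc, topSum_col hc']
    rw [card_eq_sum_card_image g, card_eq_sum_card_fiberwise (f := g) (s := {x | f x < k})
      (t := univ.image g) (fun a _ => by simp)]
    refine (sum_le_sum_of_subset (image_subset_image (subset_univ _))).trans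
      (sum_le_sum fun d _ => ?_)
    by_cases hk : ∃ z, g z = d ∧ k ≤ f z
    · obtain ⟨z, rfl, hz⟩ := hk
      trans k
      · conv_rhs => rw [← card_range k]
        apply card_le_card_of_injOn f'
        · intro a ha
          simp only [coe_filter, mem_filter, mem_univ, true_and, Set.mem_ofPred_eq] at ha
          simpa using ha.1
        · intro a ha c hc h
          simp only [coe_filter, mem_filter, mem_univ, true_and, Set.mem_ofPred_eq] at ha hc
          exact hd a c ((hf' _ _).2 h) ((hx _ _).2 (ha.2.trans hc.2.symm))
      · conv_lhs => rw [← card_range k]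
        apply card_le_card_of_surjOn f
        intro c hc
        have hc' : c < k := by simpa using hc
        obtain ⟨w, hw, hw'⟩ := hcol z c (hc'.le.trans hz)
        refine ⟨w, ?_, hw⟩
        simp [hw, hw', hc']
    · push Not at hk
      apply card_le_card
      intro a ha
      simp only [mem_filter, mem_univ, true_and] at ha ⊢
      exact ⟨hk a ha.2, ha.2⟩

theorem domLE_of_le {n : ℕ} {σ τ : SetPart n} (h : σ ≤ τ) : DomLE (shape σ) (shape τ) := by
  obtain ⟨x, hx, hall⟩ := exists_dual τ
  exact hall σ (dis_symm (dis_mono h (dis_symm hx)))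

theorem eq_of_le_shape {n : ℕ} {σ τ : SetPart n} (h : σ ≤ τ) (hs : shape σ = shape τ) :
    σ = τ := by
  classical
  obtain ⟨g, rfl⟩ := exists_perm hs
  let S : SetPart n → Finset (Fin n × Fin n) := fun σ => {p | SRel σ p.1 p.2}
  have hsub : S σ ⊆ S (permAct g σ) := by
    intro p hp
    simp only [S, mem_filter, mem_univ, true_and] at hp ⊢
    exact (le_iff_rel _ _).1 h _ _ hp
  have hcard : #(S σ) = #(S (permAct g σ)) := by
    apply card_equiv (Equiv.prodCongr g g)
    intro p
    simp [S, rel_permAct]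
  have heq := eq_of_subset_of_card_le hsub hcard.ge
  apply eq_of_rel
  intro i j
  have := congrArg (fun s => (i, j) ∈ s) heq
  simpa [S] using this

theorem shape_bot {n : ℕ} : shape (⊥ : SetPart n) = onesPart n := by
  apply Nat.Partition.ext
  change (⊥ : SetPart n).parts.val.map Finset.card = Multiset.replicate n 1
  rw [Multiset.eq_replicate]
  constructor
  · rw [Multiset.card_map]
    change #(⊥ : SetPart n).parts = n
    rw [Finpartition.card_bot, card_univ, Fintype.card_fin]
  · intro b hb
    obtain ⟨p, hp, rfl⟩ := Multiset.mem_map.1 hb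
    have hp' : p ∈ (⊥ : SetPart n).parts := hp
    obtain ⟨a, _, rfl⟩ := Finpartition.mem_bot_iff.1 hp'
    exact card_singleton a

theorem exists_min {n : ℕ} (S : Set (Nat.Partition n)) {μ : Nat.Partition n} (h : μ ∈ S) :
    ∃ ν ∈ S, DomLE ν μ ∧ ∀ ρ ∈ S, DomLE ρ ν → ρ = ν := by
  let _ : PartialOrder (Nat.Partition n) :=
    { le := DomLE
      le_refl := fun _ _ => le_rfl
      le_trans := fun _ _ _ h1 h2 k => (h1 k).trans (h2 k)
      le_antisymm := fun _ _ => domLE_antisymm }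
  obtain ⟨ν, hν, hm⟩ := Set.Finite.exists_le_minimal (Set.toFinite S) h
  exact ⟨ν, hm.1, hν, fun ρ hρ hle => domLE_antisymm hle (hm.2 hρ hle)⟩

theorem permAct_symm {n : ℕ} (g : Equiv.Perm (Fin n)) (σ : SetPart n) :
    permAct g (permAct g.symm σ) = σ := by
  apply eq_of_rel
  intro i j
  simp [rel_permAct']

theorem dis_permAct {n : ℕ} (g : Equiv.Perm (Fin n)) {a x : SetPart n}
    (h : Dis a (permAct g x)) : Dis (permAct g.symm a) x := by
  intro i j h1 h2
  rw [rel_permAct'] at h1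
  rw [← rel_permAct g] at h2
  exact g.injective (h _ _ h1 h2)

theorem up_inv {n : ℕ} {A : Set (SetPart n)} (h : SnInvariant A) : SnInvariant (Up A) :=
  fun g _ hx _ ha hd => hx _ (h g.symm _ ha) (dis_permAct g hd)

theorem permAct_mono {n : ℕ} (g : Equiv.Perm (Fin n)) {σ τ : SetPart n} (h : σ ≤ τ) :
    permAct g σ ≤ permAct g τ := by
  rw [le_iff_rel]
  intro i j hr
  rw [rel_permAct'] at hr ⊢
  exact (le_iff_rel _ _).1 h _ _ hr

theorem fi_inv {n : ℕ} (S : Set (Nat.Partition n)) : SnInvariant (fi S) := by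
  intro g σ h
  change shape _ ∈ S
  rw [shape_permAct]; exact h

theorem blocker_inv {n : ℕ} {A : Set (SetPart n)} (h : SnInvariant A) :
    SnInvariant (blocker A) := by
  intro g x hx
  rw [mem_blocker] at hx ⊢
  refine ⟨up_inv h g x hx.1, fun y hy hle => ?_⟩
  have h1 := permAct_mono g.symm hle
  have h3 : permAct g.symm (permAct g x) = x := permAct_symm g.symm x
  rw [h3] at h1
  rw [← hx.2 _ (up_inv h g.symm y hy) h1, permAct_symm]

theorem inj_aux {n : ℕ} {A A' : Set (Nat.Partition n)} (hA : IsAntichain DomLE A)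
    (h : Up (fi A) = Up (fi A')) : A ⊆ A' := by
  have key : ∀ {B B' : Set (Nat.Partition n)}, Up (fi B) = Up (fi B') → ∀ μ ∈ B,
      ∃ ν ∈ B', DomLE ν μ := by
    intro B B' hB μ hμ
    obtain ⟨y, rfl⟩ := exists_shape μ
    obtain ⟨x, hx, hall⟩ := exists_dual y
    have hnot : x ∉ Up (fi B) := fun hu => hu y hμ hx
    rw [hB] at hnot
    simp only [Up, Set.mem_ofPred_eq, not_forall, not_not] at hnot
    obtain ⟨a, ha, hd⟩ := hnot
    exact ⟨shape a, ha, hall a hd⟩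
  intro μ hμ
  obtain ⟨ν, hν, h1⟩ := key h μ hμ
  obtain ⟨ρ, hρ, h2⟩ := key h.symm ν hν
  have h3 : ρ = μ := by
    by_contra hne
    exact hA hρ hμ hne fun k => (h2 k).trans (h1 k)
  subst h3
  rw [← domLE_antisymm h1 h2]; exact hν

/-- Corollary 3.4: the map `A ↦ fi(A)*` is a bijection from the antichains in the
dominance order `Dom(n)` onto the `S_n`-invariant blockers in `Π_n` (the
`S_n`-invariant antichains of the form `C*` for an antichain `C`). -/
theorem bijOn_domAntichains_blockers (n : ℕ) :
    Set.BijOn (fun A => blocker (fi A))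
      {A : Set (Nat.Partition n) | A.Nonempty ∧ onesPart n ∉ A ∧ IsAntichain DomLE A}
      {B : Set (SetPart n) | SnInvariant B ∧
        ∃ C : Set (SetPart n), IsAnti C ∧ blocker C = B} := by
  refine ⟨?_, ?_, ?_⟩
  · rintro A ⟨⟨μ, hμ⟩, h1, hA⟩
    refine ⟨blocker_inv (fi_inv A), fi A, ⟨?_, ?_, ?_⟩, rfl⟩
    · obtain ⟨y, rfl⟩ := exists_shape μ
      exact ⟨y, hμ⟩
    · intro h
      apply h1
      rw [← shape_bot]; exact h
    · intro σ hσ τ hτ hne hle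
      by_cases hs : shape σ = shape τ
      · exact hne (eq_of_le_shape hle hs)
      · exact hA hσ hτ hs (domLE_of_le hle)
  · rintro A ⟨_, _, hA⟩ A' ⟨_, _, hA'⟩ h
    have hu := up_congr h
    exact Set.Subset.antisymm (inj_aux hA hu) (inj_aux hA' hu.symm)
  · rintro B ⟨hB, C, ⟨⟨c, hc⟩, hbot, hC⟩, rfl⟩
    have hU : SnInvariant (Up C) := by
      intro g x hx
      rw [mem_up_iff] at hx ⊢
      obtain ⟨b, hb, hle⟩ := hx
      exact ⟨_, hB g b hb, permAct_mono g hle⟩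
    have hD : SnInvariant (Up (Up C)) := up_inv hU
    have hCD : C ⊆ Up (Up C) := fun a ha x hx hd => hx a ha (dis_symm hd)
    have htop : ∃ x, x ∈ Up C := by
      obtain ⟨x, hx⟩ := exists_ker (fun _ : Fin n => 0)
      refine ⟨x, fun a ha hd => hbot ?_⟩
      have : a = ⊥ := by
        rw [← le_bot_iff, le_iff_rel]
        intro i j hij
        rw [hd i j hij ((hx i j).2 rfl)]
        exact rel_refl _ _
      rwa [this] at ha
    let S : Set (Nat.Partition n) := shape '' (Up (Up C))
    have hS : ∀ y, shape y ∈ S → y ∈ Up (Up C) := by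
      rintro y ⟨z, hz, hs⟩
      obtain ⟨g, rfl⟩ := exists_perm hs
      exact hD g z hz
    let A : Set (Nat.Partition n) := {μ | μ ∈ S ∧ ∀ ρ ∈ S, DomLE ρ μ → ρ = μ}
    refine ⟨A, ⟨?_, ?_, ?_⟩, ?_⟩
    · obtain ⟨ν, hν, _, hm⟩ := exists_min S ⟨c, hCD hc, rfl⟩
      exact ⟨ν, hν, hm⟩
    · rintro ⟨h, _⟩
      rw [← shape_bot] at h
      obtain ⟨x, hx⟩ := htop
      exact hS _ h x hx fun i j _ h2 => rel_bot h2
    · intro μ hμ ν hν hne hle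
      exact hne (hν.2 μ hμ.1 hle)
    · apply blocker_congr
      ext x
      constructor
      · intro hx a ha hd
        obtain ⟨ν, hν, hle, hm⟩ := exists_min S ⟨a, hCD ha, rfl⟩
        obtain ⟨y, hy, hyd⟩ := dis_down hd hle
        refine hx y ?_ hyd
        change shape y ∈ A
        rw [hy]; exact ⟨hν, hm⟩
      · intro hx a ha hd
        exact hS a ha.1 x hx (dis_symm hd)
end
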